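/- Let d ≥ 1, n ≥ 1, k ≥ 2, and suppose {φ_{A,a}}_{a=0}^{d-1} (A = 0,…,k−1) are k mutually unbiased orthonormal bases of ℂ^d (i.e. EuclideanSpace ℂ (Fin d)). Let s : Fin (n·d²) → Fin k → Fin d be an orthogonal array OA_n(k,d). Define vectors Φ_{A,a} in EuclideanSpace ℂ (Fin (n·d) × Fin d) by Φ_{A,a}(i,j) = conj(φ_{A,a}(i))·φ_{A,a}(j) for i < d and Φ_{A,a}(i,j) = 0 for i ≥ d. Then there exists an orthonormal basis (e_I)_{I ∈ Fin (n·d²)} of EuclideanSpace ℂ (Fin (n·d) × Fin d) such that ⟨e_I, Φ_{A,a}⟩ = 0 whenever s(I)(A) ≠ a. -/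

import Mathlib

open scoped InnerProductSpace

/-!
A Gram matrix determines a family of vectors up to a linear isometry. It therefore suffices to find
vectors in `ℂ^R`, where `R` indexes the rows of the orthogonal array, with the same Gram matrix as
the `Φ_{A,a}` and such that the vector of `(A, a)` is supported on the rows carrying `a` in column
`A`. The normalized indicator vectors of these sets of rows do this: two such sets of different
columns meet in `n` of their `n * d` elements, which matches the overlap
`⟨Φ_{A,a}, Φ_{A',a'}⟩ = |⟨φ_{A,a}, φ_{A',a'}⟩|² = 1 / d` of mutually unbiased bases.
-/

section GramMatrix

variable {𝕜 E F ι R : Type*} [RCLike 𝕜] [NormedAddCommGroup E] [InnerProductSpace 𝕜 E]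
  [NormedAddCommGroup F] [InnerProductSpace 𝕜 F]

theorem norm_linearCombination_eq_of_gram_eq {v : ι → E} {w : ι → F}
    (h : Matrix.gram 𝕜 v = Matrix.gram 𝕜 w) (x : ι →₀ 𝕜) :
    ‖Finsupp.linearCombination 𝕜 v x‖ = ‖Finsupp.linearCombination 𝕜 w x‖ := by
  have hinner (i j : ι) : ⟪v i, v j⟫_𝕜 = ⟪w i, w j⟫_𝕜 := congrFun₂ h i j
  simp only [@norm_eq_sqrt_re_inner 𝕜, Finsupp.linearCombination_apply, Finsupp.sum, sum_inner,
    inner_sum, inner_smul_left, inner_smul_right, hinner]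

theorem exists_linearIsometryEquiv_of_gram_eq [FiniteDimensional 𝕜 E] {v w : ι → E}
    (h : Matrix.gram 𝕜 v = Matrix.gram 𝕜 w) :
    ∃ L : E ≃ₗᵢ[𝕜] E, ∀ i, L (v i) = w i := by
  let T := Finsupp.linearCombination 𝕜 v
  let U := Finsupp.linearCombination 𝕜 w
  have hnorm (x : ι →₀ 𝕜) : ‖U x‖ = ‖T x‖ := (norm_linearCombination_eq_of_gram_eq h x).symm
  have hT (x : ι →₀ 𝕜) : U.compLeftInverse T ⟨T x, x, rfl⟩ = U x :=
    LinearMap.compLeftInverse_apply_of_bdd U T ⟨1, fun x => by rw [hnorm, one_mul]⟩ x _ rfl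
  let L₀ : LinearMap.range T →ₗᵢ[𝕜] E :=
    { toLinearMap := U.compLeftInverse T
      norm_map' := by
        rintro ⟨_, x, rfl⟩
        exact (congrArg norm (hT x)).trans (hnorm x) }
  refine ⟨L₀.extend.toLinearIsometryEquiv rfl, fun i => ?_⟩
  have hv : T (Finsupp.single i 1) = v i := by simp [T]
  calc L₀.extend (v i) = L₀ ⟨T (Finsupp.single i 1), _, rfl⟩ := by
        rw [← hv, ← L₀.extend_apply]
    _ = U (Finsupp.single i 1) := hT _
    _ = w i := by simp [U]

theorem exists_orthonormalBasis_repr_eq_of_gram_eq [FiniteDimensional 𝕜 E] [Fintype R]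
    (hE : Module.finrank 𝕜 E = Fintype.card R) {v : ι → EuclideanSpace 𝕜 R} {w : ι → E}
    (h : Matrix.gram 𝕜 v = Matrix.gram 𝕜 w) :
    ∃ e : OrthonormalBasis R 𝕜 E, ∀ i, e.repr (w i) = v i := by
  let b : OrthonormalBasis R 𝕜 E :=
    (stdOrthonormalBasis 𝕜 E).reindex (Fintype.equivOfCardEq (by simp [hE]))
  have hb : Matrix.gram 𝕜 (fun i => b.repr.symm (v i)) = Matrix.gram 𝕜 w := by
    ext i j
    rw [← h, Matrix.gram_apply, Matrix.gram_apply, LinearIsometryEquiv.inner_map_map]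
  obtain ⟨L, hL⟩ := exists_linearIsometryEquiv_of_gram_eq hb
  refine ⟨b.map L, fun i => ?_⟩
  calc (b.map L).repr (w i) = b.repr (L.symm (L (b.repr.symm (v i)))) := by rw [hL]; rfl
    _ = v i := by simp

theorem exists_orthonormalBasis_inner_eq_zero_of_notMem [FiniteDimensional 𝕜 E] [Fintype R]
    [DecidableEq R] (hE : Module.finrank 𝕜 E = Fintype.card R) (S : ι → Finset R) {c : ℝ}
    (hc : 0 ≤ c) {w : ι → E} (hw : ∀ i j, ⟪w i, w j⟫_𝕜 = ((c * (S i ∩ S j).card : ℝ) : 𝕜)) :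
    ∃ e : OrthonormalBasis R 𝕜 E, ∀ I i, I ∉ S i → ⟪e I, w i⟫_𝕜 = 0 := by
  let v (i : ι) : EuclideanSpace 𝕜 R := WithLp.toLp 2 fun I => if I ∈ S i then (√c : 𝕜) else 0
  have hv : Matrix.gram 𝕜 v = Matrix.gram 𝕜 w := by
    ext i j
    have hcc : (√c : 𝕜) ^ 2 = c := by rw [← RCLike.ofReal_pow, Real.sq_sqrt hc]
    calc ⟪v i, v j⟫_𝕜 = ∑ I, if I ∈ S i ∩ S j then (c : 𝕜) else 0 := by
          rw [PiLp.inner_apply]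
          refine Finset.sum_congr rfl fun I _ => ?_
          by_cases hi : I ∈ S i <;> by_cases hj : I ∈ S j <;> simp [v, hi, hj, abs_of_nonneg, hcc]
      _ = ⟪w i, w j⟫_𝕜 := by
          rw [Finset.sum_ite_mem, Finset.univ_inter, Finset.sum_const, hw]
          simp [mul_comm]
  obtain ⟨e, he⟩ := exists_orthonormalBasis_repr_eq_of_gram_eq hE hv
  refine ⟨e, fun I i hI => ?_⟩
  rw [← e.repr_apply_apply, he]
  exact if_neg hI

end GramMatrix

section OrthogonalArray

variable {R K S : Type*} [Fintype R] [DecidableEq S]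

/-- An orthogonal array of strength two and index `n`, with runs `R`, factors `K` and levels `S`:
`OA_n(k, d)` when `K` has `k` and `S` has `d` elements. That `R` has `n * d ^ 2` elements is not
imposed. -/
def IsOrthogonalArray (n : ℕ) (s : R → K → S) : Prop :=
  ∀ A A' : K, A ≠ A' → ∀ a a' : S,
    (Finset.univ.filter fun I => s I A = a ∧ s I A' = a').card = n

theorem IsOrthogonalArray.card_filter_eq [Fintype S] [Nontrivial K] {n : ℕ} {s : R → K → S}
    (hs : IsOrthogonalArray n s) (A : K) (a : S) :
    (Finset.univ.filter fun I => s I A = a).card = n * Fintype.card S := by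
  obtain ⟨A', hA'⟩ := exists_ne A
  rw [Finset.card_eq_sum_card_fiberwise (f := fun I => s I A') (t := Finset.univ)
    fun _ _ => Finset.mem_coe.2 (Finset.mem_univ _)]
  simp [Finset.filter_filter, hs A A' hA'.symm, mul_comm]

end OrthogonalArray

section MutuallyUnbiased

variable {𝕜 H R K ι : Type*} [RCLike 𝕜] [NormedAddCommGroup H] [InnerProductSpace 𝕜 H]
  [Fintype ι]

variable (𝕜) in
/-- Mutually unbiased orthonormal families, all indexed by `ι`. They are mutually unbiased bases
when `H` has dimension `Fintype.card ι`. -/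
structure IsMutuallyUnbiased (φ : K → ι → H) : Prop where
  orthonormal : ∀ A, Orthonormal 𝕜 (φ A)
  norm_inner_sq : ∀ A A', A ≠ A' → ∀ a a', ‖⟪φ A a, φ A' a'⟫_𝕜‖ ^ 2 = 1 / (Fintype.card ι : ℝ)

theorem IsMutuallyUnbiased.card_filter_eq_mul_norm_inner_sq [Fintype R] [Nontrivial K]
    [DecidableEq ι] {φ : K → ι → H} (hφ : IsMutuallyUnbiased 𝕜 φ) {n : ℕ} {s : R → K → ι}
    (hs : IsOrthogonalArray n s) (A A' : K) (a a' : ι) :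
    ((Finset.univ.filter fun I => s I A = a ∧ s I A' = a').card : ℝ) =
      n * Fintype.card ι * ‖⟪φ A a, φ A' a'⟫_𝕜‖ ^ 2 := by
  have : Nonempty ι := ⟨a⟩
  rcases eq_or_ne A A' with rfl | hA
  · rcases eq_or_ne a a' with rfl | ha
    · simp [hs.card_filter_eq, (hφ.orthonormal A).norm_eq_one]
    · have hempty : (Finset.univ.filter fun I => s I A = a ∧ s I A = a') = ∅ :=
        Finset.filter_eq_empty_iff.2 fun I _ h => ha (h.1.symm.trans h.2)
      simp [hempty, (hφ.orthonormal A).inner_eq_zero ha]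
  · rw [hs A A' hA, hφ.norm_inner_sq A A' hA]
    field_simp

end MutuallyUnbiased

section PostMeasurementState

variable {𝕜 ι m : Type*} [RCLike 𝕜]

/-- The vector `conj x ⊗ x` of `𝕜^m ⊗ 𝕜^ι`, where `𝕜^ι` is embedded into `𝕜^m` along `f : ι → m`:
the state to which the maximally entangled state collapses when the outcome of the King is `x`. -/
noncomputable def postMeasurementState (f : ι → m) (x : EuclideanSpace 𝕜 ι) :
    EuclideanSpace 𝕜 (m × ι) :=
  WithLp.toLp 2 fun p => Function.extend f (star x.ofLp) 0 p.1 * x p.2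

theorem postMeasurementState_castLE_apply {d N : ℕ} (h : d ≤ N) (x : EuclideanSpace 𝕜 (Fin d))
    (i : Fin N) (j : Fin d) :
    postMeasurementState (Fin.castLE h) x (i, j) =
      if hi : (i : ℕ) < d then starRingEnd 𝕜 (x ⟨i, hi⟩) * x j else 0 := by
  split_ifs with hi
  · have hext := (Fin.castLE_injective h).extend_apply (star x.ofLp) 0 ⟨i, hi⟩
    exact congrArg (· * x j) hext
  · have hext : Function.extend (Fin.castLE h) (star x.ofLp) 0 i = 0 :=
      Function.extend_apply' _ _ _ fun ⟨a, ha⟩ => hi (ha ▸ a.isLt)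
    simp [postMeasurementState, hext]

theorem inner_postMeasurementState [Fintype ι] [Fintype m] {f : ι → m}
    (hf : Function.Injective f) (x y : EuclideanSpace 𝕜 ι) :
    ⟪postMeasurementState f x, postMeasurementState f y⟫_𝕜 = ((‖⟪x, y⟫_𝕜‖ ^ 2 : ℝ) : 𝕜) := by
  let X := Function.extend f (star x.ofLp) 0
  let Y := Function.extend f (star y.ofLp) 0
  have hXY : ∑ i, starRingEnd 𝕜 (X i) * Y i = ⟪y, x⟫_𝕜 := by
    rw [PiLp.inner_apply]
    refine (Fintype.sum_of_injective f hf _ _ (fun i hi => ?_) fun i => ?_).symm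
    · simp [X, Function.extend_apply' _ _ _ hi]
    · simp [X, Y, hf.extend_apply]
  calc ⟪postMeasurementState f x, postMeasurementState f y⟫_𝕜
      = ∑ i, ∑ j, (starRingEnd 𝕜 (X i) * Y i) * ⟪x j, y j⟫_𝕜 := by
        rw [PiLp.inner_apply, Fintype.sum_prod_type]
        refine Finset.sum_congr rfl fun i _ => Finset.sum_congr rfl fun j _ => ?_
        simp only [postMeasurementState, RCLike.inner_apply, map_mul, X, Y]
        ring
    _ = ⟪y, x⟫_𝕜 * ⟪x, y⟫_𝕜 := by rw [← Finset.sum_mul_sum, hXY, ← PiLp.inner_apply]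
    _ = ((‖⟪x, y⟫_𝕜‖ ^ 2 : ℝ) : 𝕜) := by
        rw [← inner_conj_symm, RCLike.conj_mul, RCLike.ofReal_pow]

end PostMeasurementState

theorem mean_king_solution_of_orthogonal_array_general {𝕜 H E R K ι : Type*} [RCLike 𝕜]
    [NormedAddCommGroup H] [InnerProductSpace 𝕜 H] [NormedAddCommGroup E] [InnerProductSpace 𝕜 E]
    [FiniteDimensional 𝕜 E] [Fintype R] [Nontrivial K] [Fintype ι] [DecidableEq ι]
    {n : ℕ} (hn : n ≠ 0) {φ : K → ι → H} (hφ : IsMutuallyUnbiased 𝕜 φ)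
    {s : R → K → ι} (hs : IsOrthogonalArray n s) (hE : Module.finrank 𝕜 E = Fintype.card R)
    {Φ : K → ι → E}
    (hΦ : ∀ A A' a a', ⟪Φ A a, Φ A' a'⟫_𝕜 = ((‖⟪φ A a, φ A' a'⟫_𝕜‖ ^ 2 : ℝ) : 𝕜)) :
    ∃ e : OrthonormalBasis R 𝕜 E, ∀ I A a, s I A ≠ a → ⟪e I, Φ A a⟫_𝕜 = 0 := by
  classical
  let S (p : K × ι) : Finset R := Finset.univ.filter fun I => s I p.1 = p.2
  have hS (p q : K × ι) :
      ⟪Φ p.1 p.2, Φ q.1 q.2⟫_𝕜 = ((1 / (n * Fintype.card ι) * (S p ∩ S q).card : ℝ) : 𝕜) := by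
    have : Nonempty ι := ⟨p.2⟩
    rw [hΦ, ← Finset.filter_and, hφ.card_filter_eq_mul_norm_inner_sq hs]
    congr 1
    field_simp
  obtain ⟨e, he⟩ := exists_orthonormalBasis_inner_eq_zero_of_notMem hE S (by positivity) hS
  exact ⟨e, fun I A a hI => he I (A, a) (by simpa [S] using hI)⟩

/-- **Mean King's problem solution from an orthogonal array.**
Given `k` mutually unbiased orthonormal bases of `ℂ^d` and an orthogonal array
`OA_n(k,d)` used as estimation function, there exists an orthonormal basis of
`ℂ^{nd} ⊗ ℂ^d` satisfying the survival condition. -/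
theorem mean_king_solution_of_orthogonal_array
    (d n k : ℕ) (hd : 1 ≤ d) (hn : 1 ≤ n) (hk : 2 ≤ k)
    (φ : Fin k → OrthonormalBasis (Fin d) ℂ (EuclideanSpace ℂ (Fin d)))
    (hMUB : ∀ A A' : Fin k, A ≠ A' → ∀ a a' : Fin d,
      ‖(⟪φ A a, φ A' a'⟫_ℂ)‖ ^ 2 = 1 / (d : ℝ))
    (s : Fin (n * d ^ 2) → Fin k → Fin d)
    (hOA : ∀ A A' : Fin k, A ≠ A' → ∀ a a' : Fin d,
      (Finset.univ.filter (fun I : Fin (n * d ^ 2) => s I A = a ∧ s I A' = a')).card = n)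
    (Φ : Fin k → Fin d → EuclideanSpace ℂ (Fin (n * d) × Fin d))
    (hΦ : ∀ (A : Fin k) (a : Fin d) (i : Fin (n * d)) (j : Fin d),
      Φ A a (i, j) =
        if h : (i : ℕ) < d then (starRingEnd ℂ) (φ A a ⟨i, h⟩) * φ A a j else 0) :
    ∃ e : OrthonormalBasis (Fin (n * d ^ 2)) ℂ (EuclideanSpace ℂ (Fin (n * d) × Fin d)),
      ∀ (I : Fin (n * d ^ 2)) (A : Fin k) (a : Fin d),
        s I A ≠ a → ⟪e I, Φ A a⟫_ℂ = 0 := by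
  have : Nontrivial (Fin k) := Fin.nontrivial_iff_two_le.2 hk
  have hdn : d ≤ n * d := Nat.le_mul_of_pos_left d hn
  have hφ : IsMutuallyUnbiased ℂ fun A => ⇑(φ A) :=
    ⟨fun A => (φ A).orthonormal, by simpa only [Fintype.card_fin] using hMUB⟩
  have hstate (A : Fin k) (a : Fin d) : Φ A a = postMeasurementState (Fin.castLE hdn) (φ A a) := by
    ext ⟨i, j⟩
    rw [hΦ, postMeasurementState_castLE_apply]
  have hdim : Module.finrank ℂ (EuclideanSpace ℂ (Fin (n * d) × Fin d)) =
      Fintype.card (Fin (n * d ^ 2)) := by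
    simp [pow_two, mul_assoc]
  refine mean_king_solution_of_orthogonal_array_general (by omega) hφ hOA hdim fun A A' a a' => ?_
  rw [hstate, hstate, inner_postMeasurementState (Fin.castLE_injective hdn)]
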